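/- Let R be a regular commutative coherent ring, C a wide subcategory of the finitely presented R-modules, and M ∈ C. If N is a finitely presented submodule or a finitely presented quotient module of M, then N ∈ C. In particular, if R is in addition Noetherian, then every wide subcategory of the finitely generated R-modules is a Serre class. -/

import Mathlib

open CategoryTheory CategoryTheory.Limits CategoryTheory.Pretriangulated ZeroObject

universe w u

/-- A full subcategory (given as a set of objects) of an abelian category is *wide*
if it is closed under isomorphisms, kernels, cokernels and extensions. -/
structure IsWideSubcategory {A : Type*} [Category A] [Abelian A] (C : Set A) : Prop where
  mem_of_iso : ∀ {X Y : A}, (X ≅ Y) → X ∈ C → Y ∈ C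
  kernel_mem : ∀ {X Y : A} (f : X ⟶ Y), X ∈ C → Y ∈ C → kernel f ∈ C
  cokernel_mem : ∀ {X Y : A} (f : X ⟶ Y), X ∈ C → Y ∈ C → cokernel f ∈ C
  extension_mem : ∀ (S : CategoryTheory.ShortComplex A), S.ShortExact →
    S.X₁ ∈ C → S.X₃ ∈ C → S.X₂ ∈ C

/-- The wide subcategory generated by a set of objects: the intersection of all
wide subcategories containing it. -/
def wideClosure {A : Type*} [Category A] [Abelian A] (S : Set A) : Set A :=
  ⋂₀ {C : Set A | IsWideSubcategory C ∧ S ⊆ C}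

/-- `C₀`, the wide subcategory of `R`-modules generated by the module `R`. -/
def wideSubcatGenByRing (R : Type u) [Ring R] : Set (ModuleCat.{u} R) :=
  wideClosure {ModuleCat.of R R}

/-- A ring is left coherent if every finitely generated left ideal is finitely
presented as a module. -/
def IsLeftCoherentRing (R : Type u) [Ring R] : Prop :=
  ∀ I : Ideal R, I.FG → Module.FinitePresentation R I

/-- The collection of finitely presented `R`-modules. -/
def finPresModules (R : Type u) [Ring R] : Set (ModuleCat.{u} R) :=
  {M : ModuleCat.{u} R | Module.FinitePresentation R M}

/-- An `R`-module `M` has finite projective dimension if there is an `i` such that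
`Ext^j(M, N) = 0` for all modules `N` and all `j > i`. -/
def HasFiniteProjectiveDimension (R : Type u) [Ring R] (M : ModuleCat.{u} R) : Prop :=
  ∃ i : ℕ, ∀ (N : ModuleCat.{u} R) (j : ℕ), i < j →
    Subsingleton (((_root_.Ext ℤ (ModuleCat.{u} R) j).obj (Opposite.op M)).obj N)

/-!
Over a commutative coherent ring, membership of a finitely presented module `M` in a wide
subcategory `C` depends only on its annihilator.  Indeed `C` is stable under tensoring with
finitely presented modules, so `R ⧸ J ∈ C` forces every finitely presented module killed by `J`
into `C`, and it suffices to show `R ⧸ ann M ∈ C` whenever `M ∈ C`.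

Suppose `s • M` lies in the span of `n` vectors, and let `I` contain the coefficients of all linear
relations among them.  The induced map `(R ⧸ I)ⁿ → M ⧸ I • M` has kernel and cokernel killed by `s`,
so `R ⧸ (I ⊔ (s)) ∈ C` implies `R ⧸ I ∈ C`.  A coefficient `t` of a relation is a denominator for
eliminating one of the vectors: `s * t` multiplies `M` into the span of the others.  Now let `I` be
generated by such coefficients and let `ann M ≤ J` with `R ⧸ (J ⊔ (s)) ∈ C`.  Then `C` contains
`R ⧸ (J ⊔ I)`, hence by extensions `R ⧸ (J ⊔ (s) * I)`, and by induction on `n` the generators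
`s * t` of `(s) * I` can be dropped one at a time, leaving `R ⧸ J ∈ C`.  Take `s = 1` and
`J = ann M`.
-/

section PseudoCoherent

/-- Bourbaki's pseudo-coherent modules: every finitely generated submodule is finitely presented.
A coherent module is a finitely generated pseudo-coherent one. -/
def IsPseudoCoherent (R M : Type*) [Ring R] [AddCommGroup M] [Module R M] : Prop :=
  ∀ L : Submodule R M, L.FG → Module.FinitePresentation R L

variable {R M N : Type*} [Ring R] [AddCommGroup M] [Module R M] [AddCommGroup N] [Module R N]

namespace IsPseudoCoherent

lemma finitePresentation_range [Module.Finite R M] (hN : IsPseudoCoherent R N) (f : M →ₗ[R] N) :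
    Module.FinitePresentation R (LinearMap.range f) :=
  hN _ (Module.Finite.iff_fg.mp inferInstance)

lemma fg_ker [Module.Finite R M] (hN : IsPseudoCoherent R N) (f : M →ₗ[R] N) :
    (LinearMap.ker f).FG := by
  have := hN.finitePresentation_range f
  rw [← LinearMap.ker_rangeRestrict]
  exact Module.FinitePresentation.fg_ker _ f.surjective_rangeRestrict

lemma of_injective (hN : IsPseudoCoherent R N) (f : M →ₗ[R] N) (hf : Function.Injective f) :
    IsPseudoCoherent R M := fun L hL ↦
  have := hN _ (hL.map f)
  .of_equiv (Submodule.equivMapOfInjective f hf L).symm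

lemma of_surjective (hM : IsPseudoCoherent R M) (f : M →ₗ[R] N) (hf : Function.Surjective f)
    (hker : (LinearMap.ker f).FG) : IsPseudoCoherent R N := by
  intro L hL
  have hle : LinearMap.ker f ≤ L.comap f := LinearMap.ker_le_comap f
  have hfg : (L.comap f).FG := by
    apply Submodule.fg_of_fg_map_of_fg_inf_ker f
    · rwa [Submodule.map_comap_eq_of_surjective hf]
    · rwa [inf_eq_right.mpr hle]
  have := hM _ hfg
  refine Module.finitePresentation_of_surjective (f.submoduleComap L)
    (f.submoduleComap_surjective_of_surjective L hf) ?_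
  apply Submodule.fg_of_fg_map_injective _ (L.comap f).subtype_injective
  have hker' :
      LinearMap.ker (f.submoduleComap L) = (LinearMap.ker f).comap (L.comap f).subtype := by
    ext x
    simp [Subtype.ext_iff]
  rwa [hker', Submodule.map_comap_subtype, inf_eq_right.mpr hle]

lemma prod (hM : IsPseudoCoherent R M) (hN : IsPseudoCoherent R N) :
    IsPseudoCoherent R (M × N) := by
  intro L hL
  have : Module.Finite R L := .of_fg hL
  let p : L →ₗ[R] M := LinearMap.fst R M N ∘ₗ L.subtype
  have : Module.Finite R (LinearMap.ker p) := .of_fg (hM.fg_ker p)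
  let q : LinearMap.ker p →ₗ[R] N := LinearMap.snd R M N ∘ₗ L.subtype ∘ₗ Submodule.subtype _
  have hq : Function.Injective q := by
    rw [injective_iff_map_eq_zero]
    rintro ⟨x, hx⟩ hqx
    exact Subtype.ext (Subtype.ext (Prod.ext hx hqx))
  have := hN.finitePresentation_range (M := LinearMap.ker p) q
  have : Module.FinitePresentation R (LinearMap.ker p.rangeRestrict) := by
    rw [LinearMap.ker_rangeRestrict]
    exact Module.FinitePresentation.of_equiv (R := R) (M := LinearMap.range q)
      (N := LinearMap.ker p) (LinearEquiv.ofInjective q hq).symm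
  have := hM.finitePresentation_range p
  exact Module.finitePresentation_of_ker p.rangeRestrict p.surjective_rangeRestrict

lemma finFunction (hM : IsPseudoCoherent R M) (n : ℕ) : IsPseudoCoherent R (Fin n → M) := by
  induction n with
  | zero => exact fun _ _ ↦ inferInstance
  | succ n ih =>
    let e := (Fin.consLinearEquiv R fun _ : Fin (n + 1) ↦ M).symm
    exact (hM.prod ih).of_injective e.toLinearMap e.injective

end IsPseudoCoherent

lemma IsLeftCoherentRing.isPseudoCoherent {R : Type*} [Ring R] (hR : IsLeftCoherentRing R)
    (M : Type*) [AddCommGroup M] [Module R M] [Module.FinitePresentation R M] :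
    IsPseudoCoherent R M := by
  obtain ⟨n, f, hf⟩ := Module.Finite.exists_fin' R M
  have hR' : IsPseudoCoherent R R := hR
  exact (hR'.finFunction n).of_surjective f hf (Module.FinitePresentation.fg_ker f hf)

end PseudoCoherent

lemma finitePresentation_quotient_of_fg {R M : Type*} [Ring R] [AddCommGroup M] [Module R M]
    [Module.FinitePresentation R M] {K : Submodule R M} (hK : K.FG) :
    Module.FinitePresentation R (M ⧸ K) :=
  Module.finitePresentation_of_surjective K.mkQ K.mkQ_surjective (by rwa [Submodule.ker_mkQ])

section Relations

variable {R M : Type*} [CommRing R] [AddCommGroup M] [Module R M]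

lemma IsPseudoCoherent.fg_annihilator (hM : IsPseudoCoherent R M) [Module.Finite R M] :
    (Module.annihilator R M).FG := by
  obtain ⟨n, x, hx⟩ :=
    Submodule.fg_iff_exists_fin_generating_family.mp (Module.Finite.fg_top (R := R) (M := M))
  have : Module.annihilator R M = LinearMap.ker (LinearMap.toSpanSingleton R (Fin n → M) x) := by
    ext r
    rw [← Submodule.annihilator_top, ← hx, Submodule.mem_annihilator_span]
    simp [funext_iff]
  rw [this]
  exact (hM.finFunction n).fg_ker _

/-- The ideal generated by the coefficients of the linear relations among the `x i`.  For `n`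
vectors it is the Fitting ideal `Fitt_{n-1}` of their span. -/
def relationIdeal (R : Type*) {M ι : Type*} [CommRing R] [AddCommGroup M] [Module R M] [Fintype ι]
    (x : ι → M) : Ideal R :=
  Ideal.span {a | ∃ v : ι → R, ∑ i, v i • x i = 0 ∧ ∃ i, v i = a}

variable {ι : Type*} [Fintype ι] {x : ι → M}

lemma mem_relationIdeal {v : ι → R} (hv : ∑ i, v i • x i = 0) (i : ι) : v i ∈ relationIdeal R x :=
  Ideal.subset_span ⟨v, hv, i, rfl⟩

lemma IsPseudoCoherent.fg_relationIdeal (hM : IsPseudoCoherent R M) (x : ι → M) :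
    (relationIdeal R x).FG := by
  have : relationIdeal R x = ⨆ i, (LinearMap.ker (Fintype.linearCombination R x)).map
      (LinearMap.proj (φ := fun _ ↦ R) i) := by
    refine le_antisymm (Ideal.span_le.mpr ?_) (iSup_le fun i ↦ ?_)
    · rintro _ ⟨v, hv, i, rfl⟩
      exact Submodule.mem_iSup_of_mem i ⟨v, hv, rfl⟩
    · rintro _ ⟨v, hv, rfl⟩
      exact mem_relationIdeal hv i
  rw [this]
  exact Submodule.fg_iSup _ fun i ↦ (hM.fg_ker _).map _

lemma smul_mem_span_removeNth {n : ℕ} {x : Fin (n + 1) → M} {v : Fin (n + 1) → R}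
    (hv : ∑ j, v j • x j = 0) (i : Fin (n + 1)) {m : M}
    (hm : m ∈ Submodule.span R (Set.range x)) :
    v i • m ∈ Submodule.span R (Set.range (i.removeNth x)) := by
  suffices Submodule.span R (Set.range x) ≤
      (Submodule.span R (Set.range (i.removeNth x))).comap (LinearMap.lsmul R M (v i)) from this hm
  have hx (j) : x (i.succAbove j) ∈ Submodule.span R (Set.range (i.removeNth x)) :=
    Submodule.subset_span ⟨j, rfl⟩
  rw [Submodule.span_le, Set.range_subset_iff]
  refine i.forall_iff_succAbove.mpr ⟨?_, fun j ↦ Submodule.smul_mem _ _ (hx j)⟩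
  rw [Fin.sum_univ_succAbove _ i] at hv
  change v i • x i ∈ Submodule.span R (Set.range (i.removeNth x))
  rw [eq_neg_of_add_eq_zero_left hv]
  exact neg_mem (sum_mem fun j _ ↦ Submodule.smul_mem _ _ (hx j))

/-- The reduction modulo `I` of the linear combination map `v ↦ ∑ i, v i • x i`. -/
noncomputable def reducedCombination [DecidableEq ι] (I : Ideal R) (x : ι → M) :
    (ι → R ⧸ I) →ₗ[R] M ⧸ (I • ⊤ : Submodule R M) :=
  Submodule.piQuotientLift (fun _ ↦ I) (I • ⊤) (fun i ↦ LinearMap.toSpanSingleton R M (x i))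
    fun _ _ hr ↦ Submodule.smul_mem_smul hr trivial

variable [DecidableEq ι] {I : Ideal R} {s : R}

lemma reducedCombination_mk (v : ι → R) :
    reducedCombination I x (fun i ↦ Submodule.Quotient.mk (v i)) =
      Submodule.Quotient.mk (∑ i, v i • x i) :=
  (Submodule.piQuotientLift_mk _ _ _ _ v).trans (by simp [LinearMap.lsum_apply])

lemma mem_annihilator_quotient_range_reducedCombination
    (hs : ∀ m : M, s • m ∈ Submodule.span R (Set.range x)) :
    s ∈ Module.annihilator R (_ ⧸ LinearMap.range (reducedCombination I x)) := by
  refine Module.mem_annihilator.mpr fun y ↦ ?_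
  obtain ⟨y, rfl⟩ := Submodule.Quotient.mk_surjective _ y
  obtain ⟨m, rfl⟩ := Submodule.Quotient.mk_surjective _ y
  obtain ⟨v, hv⟩ := (Submodule.mem_span_range_iff_exists_fun R).mp (hs m)
  rw [← Submodule.Quotient.mk_smul, Submodule.Quotient.mk_eq_zero, ← Submodule.Quotient.mk_smul,
    ← hv, ← reducedCombination_mk]
  exact LinearMap.mem_range_self _ _

lemma mem_annihilator_ker_reducedCombination
    (hs : ∀ m : M, s • m ∈ Submodule.span R (Set.range x)) (hI : relationIdeal R x ≤ I) :
    s ∈ Module.annihilator R (LinearMap.ker (reducedCombination I x)) := by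
  rw [Submodule.mem_annihilator]
  intro y hy
  choose v hv using fun i ↦ Submodule.Quotient.mk_surjective I (y i)
  obtain rfl := funext hv
  rw [LinearMap.mem_ker, reducedCombination_mk, Submodule.Quotient.mk_eq_zero] at hy
  obtain ⟨w, hwI, hw⟩ : ∃ w : ι → R, (∀ i, w i ∈ I) ∧ ∑ i, w i • x i = s • ∑ i, v i • x i := by
    have hmem : s • ∑ i, v i • x i ∈ I • Submodule.span R (Set.range x) := by
      have hle : (⊤ : Submodule R M).map (LinearMap.lsmul R M s) ≤ Submodule.span R (Set.range x) :=
        Submodule.map_le_iff_le_comap.mpr fun m _ ↦ hs m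
      have hmap := Submodule.mem_map_of_mem (f := LinearMap.lsmul R M s) hy
      rw [Submodule.map_smul''] at hmap
      exact smul_mono_right I hle hmap
    obtain ⟨w, hwI, hw⟩ := (Submodule.mem_ideal_smul_span_iff_exists_sum I x _).mp hmem
    exact ⟨w, hwI, by rw [← hw, Finsupp.sum_fintype _ _ (by simp)]⟩
  have hrel : ∑ i, (s • v - w) i • x i = 0 := by
    simp only [Pi.sub_apply, Pi.smul_apply, sub_smul, smul_assoc,
      Finset.sum_sub_distrib, hw, Finset.smul_sum, sub_self]
  funext i
  refine Ideal.Quotient.eq_zero_iff_mem.mpr ?_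
  simpa using add_mem (hI (mem_relationIdeal hrel i)) (hwI i)

end Relations

lemma le_annihilator_quotient_smul_top {R : Type*} [CommRing R] (I : Ideal R) (M : Type*)
    [AddCommGroup M] [Module R M] : I ≤ Module.annihilator R (M ⧸ (I • ⊤ : Submodule R M)) :=
  (Module.isTorsionBySet_iff_subset_annihilator _ _).mp <|
    Module.isTorsionBySet_quotient_ideal_smul M I

namespace IsWideSubcategory

section Abelian

variable {R : Type u} [Ring R] {C : Set (ModuleCat.{u} R)} (hC : IsWideSubcategory C)
  {X Y Z : Type u} [AddCommGroup X] [Module R X] [AddCommGroup Y] [Module R Y]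
  [AddCommGroup Z] [Module R Z]

include hC

lemma mem_of_linearEquiv (e : X ≃ₗ[R] Y) (hX : ModuleCat.of R X ∈ C) : ModuleCat.of R Y ∈ C :=
  hC.mem_of_iso e.toModuleIso hX

lemma ker_mem (f : X →ₗ[R] Y) (hX : ModuleCat.of R X ∈ C) (hY : ModuleCat.of R Y ∈ C) :
    ModuleCat.of R (LinearMap.ker f) ∈ C :=
  hC.mem_of_iso (ModuleCat.kernelIsoKer (ModuleCat.ofHom f)) (hC.kernel_mem _ hX hY)

lemma quotient_range_mem (f : X →ₗ[R] Y) (hX : ModuleCat.of R X ∈ C)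
    (hY : ModuleCat.of R Y ∈ C) : ModuleCat.of R (Y ⧸ LinearMap.range f) ∈ C :=
  hC.mem_of_iso (ModuleCat.cokernelIsoRangeQuotient (ModuleCat.ofHom f)) (hC.cokernel_mem _ hX hY)

lemma mem_of_ker_mem {f : X →ₗ[R] Y} (hf : Function.Surjective f)
    (hker : ModuleCat.of R (LinearMap.ker f) ∈ C) (hY : ModuleCat.of R Y ∈ C) :
    ModuleCat.of R X ∈ C :=
  hC.extension_mem _ (LinearMap.shortExact_shortComplexKer hf) hker hY

lemma mem_of_exact {f : X →ₗ[R] Y} {g : Y →ₗ[R] Z} (hfg : Function.Exact f g)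
    (hg : Function.Surjective g) (hX : ModuleCat.of R X ∈ C) (hY : ModuleCat.of R Y ∈ C) :
    ModuleCat.of R Z ∈ C :=
  hC.mem_of_linearEquiv (hfg.linearEquivOfSurjective hg) (hC.quotient_range_mem f hX hY)

lemma mem_of_leftInverse (i : X →ₗ[R] Y) {r : Y →ₗ[R] X} (hri : Function.LeftInverse r i)
    (hY : ModuleCat.of R Y ∈ C) : ModuleCat.of R X ∈ C := by
  refine hC.mem_of_exact (f := LinearMap.id - i ∘ₗ r) (g := r) (fun y ↦ ⟨fun hy ↦ ⟨y, ?_⟩, ?_⟩)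
    hri.surjective hY hY
  · simp [hy]
  · rintro ⟨z, rfl⟩
    simp [hri (r z)]

lemma mem_of_quotient_mem (L : Submodule R X) (hX : ModuleCat.of R X ∈ C)
    (hL : ModuleCat.of R (X ⧸ L) ∈ C) : ModuleCat.of R L ∈ C :=
  hC.mem_of_linearEquiv (LinearEquiv.ofEq _ _ L.ker_mkQ) (hC.ker_mem L.mkQ hX hL)

lemma mem_of_submodule_mem (L : Submodule R X) (hL : ModuleCat.of R L ∈ C)
    (hXL : ModuleCat.of R (X ⧸ L) ∈ C) : ModuleCat.of R X ∈ C :=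
  hC.mem_of_ker_mem L.mkQ_surjective
    (hC.mem_of_linearEquiv (LinearEquiv.ofEq _ _ L.ker_mkQ.symm) hL) hXL

lemma mem_of_ker_mem_of_coker_mem (f : X →ₗ[R] Y) (hY : ModuleCat.of R Y ∈ C)
    (hker : ModuleCat.of R (LinearMap.ker f) ∈ C)
    (hcoker : ModuleCat.of R (Y ⧸ LinearMap.range f) ∈ C) : ModuleCat.of R X ∈ C :=
  hC.mem_of_submodule_mem (LinearMap.ker f) hker <|
    hC.mem_of_linearEquiv f.quotKerEquivRange.symm (hC.mem_of_quotient_mem _ hY hcoker)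

lemma mem_of_subsingleton [Subsingleton Y] (hX : ModuleCat.of R X ∈ C) : ModuleCat.of R Y ∈ C :=
  hC.mem_of_exact (f := LinearMap.id) (g := (0 : X →ₗ[R] Y))
    (fun x ↦ ⟨fun _ ↦ ⟨x, rfl⟩, fun _ ↦ rfl⟩) (Function.surjective_to_subsingleton _) hX hX

lemma prod_mem (hX : ModuleCat.of R X ∈ C) (hY : ModuleCat.of R Y ∈ C) :
    ModuleCat.of R (X × Y) ∈ C :=
  hC.mem_of_ker_mem (f := LinearMap.snd R X Y) LinearMap.snd_surjective
    (hC.mem_of_linearEquiv ((LinearEquiv.ofInjective _ LinearMap.inl_injective).trans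
      (LinearEquiv.ofEq _ _ (LinearMap.range_inl R X Y))) hX) hY

lemma finFunction_mem (hX : ModuleCat.of R X ∈ C) (n : ℕ) : ModuleCat.of R (Fin n → X) ∈ C := by
  induction n with
  | zero => exact hC.mem_of_subsingleton hX
  | succ n ih =>
    exact hC.mem_of_linearEquiv (Fin.consLinearEquiv R fun _ ↦ X) (hC.prod_mem hX ih)

end Abelian

section Annihilator

open TensorProduct

variable {R : Type u} [CommRing R] {C : Set (ModuleCat.{u} R)} (hC : IsWideSubcategory C)
  {X Y : Type u} [AddCommGroup X] [Module R X] [AddCommGroup Y] [Module R Y]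
  {I J K : Ideal R}

include hC

lemma tensorProduct_mem (hX : ModuleCat.of R X ∈ C) (P : Type u) [AddCommGroup P] [Module R P]
    [Module.FinitePresentation R P] : ModuleCat.of R (X ⊗[R] P) ∈ C := by
  obtain ⟨n, m, f, g, hf, hgf⟩ := Module.FinitePresentation.exists_fin' R P
  have hfree (k : ℕ) : ModuleCat.of R (X ⊗[R] (Fin k → R)) ∈ C :=
    hC.mem_of_linearEquiv (TensorProduct.piScalarRight R R X (Fin k)).symm
      (hC.finFunction_mem hX k)
  exact hC.mem_of_exact (lTensor_exact X hgf hf) (LinearMap.lTensor_surjective X hf)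
    (hfree m) (hfree n)

lemma quotient_smul_top_mem (hX : ModuleCat.of R X ∈ C) (hI : I.FG) :
    ModuleCat.of R (X ⧸ (I • ⊤ : Submodule R X)) ∈ C :=
  have := finitePresentation_quotient_of_fg hI
  hC.mem_of_linearEquiv (TensorProduct.tensorQuotEquivQuotSMul X I)
    (hC.tensorProduct_mem hX (R ⧸ I))

lemma mem_of_le_annihilator [Module.FinitePresentation R X] (hJ : ModuleCat.of R (R ⧸ J) ∈ C)
    (hJX : J ≤ Module.annihilator R X) : ModuleCat.of R X ∈ C := by
  have hbot : (J • ⊤ : Submodule R X) = ⊥ := by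
    rwa [← Submodule.annihilator_top, Submodule.le_annihilator_iff] at hJX
  exact hC.mem_of_linearEquiv
    (TensorProduct.quotTensorEquivQuotSMul X J ≪≫ₗ Submodule.quotEquivOfEqBot _ hbot)
    (hC.tensorProduct_mem hJ X)

lemma quotient_mem_of_le (hJ : ModuleCat.of R (R ⧸ J) ∈ C) (hJK : J ≤ K) (hK : K.FG) :
    ModuleCat.of R (R ⧸ K) ∈ C :=
  have := finitePresentation_quotient_of_fg hK
  hC.mem_of_le_annihilator hJ (hJK.trans_eq Ideal.annihilator_quotient.symm)

lemma mem_of_mul_le_annihilator (hR : IsLeftCoherentRing R) [Module.FinitePresentation R X]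
    (hJ : ModuleCat.of R (R ⧸ J) ∈ C) (hK : ModuleCat.of R (R ⧸ K) ∈ C) (hJfg : J.FG)
    (hJK : K * J ≤ Module.annihilator R X) : ModuleCat.of R X ∈ C := by
  have hfg : (J • ⊤ : Submodule R X).FG := Submodule.FG.smul hJfg Module.Finite.fg_top
  have := finitePresentation_quotient_of_fg hfg
  have := hR.isPseudoCoherent X _ hfg
  have hKJ : K ≤ Module.annihilator R (J • ⊤ : Submodule R X) := by
    rwa [← Submodule.annihilator_top, Submodule.le_annihilator_iff, Submodule.mul_smul,
      ← Submodule.le_annihilator_iff] at hJK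
  exact hC.mem_of_submodule_mem (J • ⊤) (hC.mem_of_le_annihilator hK hKJ)
    (hC.mem_of_le_annihilator hJ (le_annihilator_quotient_smul_top J X))

lemma quotient_sup_mul_mem (hR : IsLeftCoherentRing R) (hI : ModuleCat.of R (R ⧸ (J ⊔ I)) ∈ C)
    (hK : ModuleCat.of R (R ⧸ (J ⊔ K)) ∈ C) (hJfg : J.FG) (hIfg : I.FG) (hKfg : K.FG) :
    ModuleCat.of R (R ⧸ (J ⊔ I * K)) ∈ C := by
  have := finitePresentation_quotient_of_fg (Submodule.FG.sup hJfg (Submodule.FG.mul hIfg hKfg))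
  refine hC.mem_of_mul_le_annihilator hR hK hI (Submodule.FG.sup hJfg hKfg) ?_
  rw [Ideal.annihilator_quotient, Ideal.sup_mul, Ideal.mul_sup I]
  exact sup_le (le_sup_of_le_left Ideal.mul_le_left) (sup_le_sup_right Ideal.mul_le_right _)

lemma mem_of_le_annihilator_ker_coker (hR : IsLeftCoherentRing R) [Module.FinitePresentation R X]
    [Module.FinitePresentation R Y] (f : X →ₗ[R] Y) (hY : ModuleCat.of R Y ∈ C)
    (hK : ModuleCat.of R (R ⧸ K) ∈ C) (hker : K ≤ Module.annihilator R (LinearMap.ker f))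
    (hcoker : K ≤ Module.annihilator R (Y ⧸ LinearMap.range f)) : ModuleCat.of R X ∈ C := by
  have := hR.isPseudoCoherent X _ ((hR.isPseudoCoherent Y).fg_ker f)
  have : Module.FinitePresentation R (Y ⧸ LinearMap.range f) :=
    finitePresentation_quotient_of_fg (Module.Finite.iff_fg.mp inferInstance)
  exact hC.mem_of_ker_mem_of_coker_mem f hY (hC.mem_of_le_annihilator hK hker)
    (hC.mem_of_le_annihilator hK hcoker)

lemma quotient_mem_of_relationIdeal_le (hR : IsLeftCoherentRing R) [Module.FinitePresentation R X]
    (hX : ModuleCat.of R X ∈ C) {n : ℕ} {s : R} {x : Fin (n + 1) → X}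
    (hs : ∀ m, s • m ∈ Submodule.span R (Set.range x)) (hI : relationIdeal R x ≤ I) (hIfg : I.FG)
    (hIs : ModuleCat.of R (R ⧸ (I ⊔ Ideal.span {s})) ∈ C) : ModuleCat.of R (R ⧸ I) ∈ C := by
  have := finitePresentation_quotient_of_fg hIfg
  have := finitePresentation_quotient_of_fg <|
    Submodule.FG.smul hIfg (Module.Finite.fg_top (R := R) (M := X))
  have hIker : I ≤ Module.annihilator R (LinearMap.ker (reducedCombination I x)) :=
    le_trans (by simp [Module.annihilator_pi, Ideal.annihilator_quotient])
      (LinearMap.annihilator_le_of_injective _ (Submodule.subtype_injective _))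
  have hIcoker : I ≤ Module.annihilator R (_ ⧸ LinearMap.range (reducedCombination I x)) :=
    (le_annihilator_quotient_smul_top I X).trans
      (LinearMap.annihilator_le_of_surjective _ (Submodule.mkQ_surjective _))
  have hfree : ModuleCat.of R (Fin (n + 1) → R ⧸ I) ∈ C :=
    hC.mem_of_le_annihilator_ker_coker hR (reducedCombination I x)
      (hC.quotient_smul_top_mem hX hIfg) hIs
      (sup_le hIker <| (Ideal.span_singleton_le_iff_mem _).mpr <|
        mem_annihilator_ker_reducedCombination hs hI)
      (sup_le hIcoker <| (Ideal.span_singleton_le_iff_mem _).mpr <|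
        mem_annihilator_quotient_range_reducedCombination hs)
  exact hC.mem_of_leftInverse (LinearMap.single R (fun _ ↦ R ⧸ I) 0)
    (r := LinearMap.proj 0) (fun r ↦ by simp) hfree

end Annihilator

end IsWideSubcategory

section Removable

variable {R : Type u} [CommRing R] {C : Set (ModuleCat.{u} R)} {A I K : Ideal R}

/-- The summand `I` may be dropped from cyclic modules `R ⧸ (J ⊔ I)` in `C`, for all finitely
generated ideals `J` above the fixed ideal `A`. -/
def IsRemovable (C : Set (ModuleCat.{u} R)) (A I : Ideal R) : Prop :=
  ∀ J : Ideal R, J.FG → A ≤ J → ModuleCat.of R (R ⧸ (J ⊔ I)) ∈ C → ModuleCat.of R (R ⧸ J) ∈ C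

namespace IsRemovable

lemma of_le (hI : I ≤ A) : IsRemovable C A I := fun J _ hAJ hJI ↦ by
  rwa [sup_eq_left.mpr (hI.trans hAJ)] at hJI

lemma sup (hI : IsRemovable C A I) (hK : IsRemovable C A K) (hIfg : I.FG) :
    IsRemovable C A (I ⊔ K) := fun J hJ hAJ hJIK ↦
  hI J hJ hAJ <| hK (J ⊔ I) (Submodule.FG.sup hJ hIfg) (le_sup_of_le_left hAJ) <| by rwa [sup_assoc]

lemma span {T : Finset R} (hT : ∀ t ∈ T, IsRemovable C A (Ideal.span {t})) :
    IsRemovable C A (Ideal.span T) := by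
  classical
  induction T using Finset.induction_on with
  | empty => exact of_le (by simp)
  | insert a T _ ih =>
    rw [Finset.coe_insert, Ideal.span_insert]
    exact (hT a (T.mem_insert_self a)).sup (ih fun t ht ↦ hT t (Finset.mem_insert_of_mem ht))
      (Submodule.fg_span_singleton a)

end IsRemovable

namespace IsWideSubcategory

variable {X Y : Type u} [AddCommGroup X] [Module R X] [Module.FinitePresentation R X]
  [AddCommGroup Y] [Module R Y] [Module.FinitePresentation R Y]

lemma isRemovable_span_singleton (hC : IsWideSubcategory C) (hR : IsLeftCoherentRing R)
    (hX : ModuleCat.of R X ∈ C) {n : ℕ} {s : R} {x : Fin n → X}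
    (hs : ∀ m, s • m ∈ Submodule.span R (Set.range x)) :
    IsRemovable C (Module.annihilator R X) (Ideal.span {s}) := by
  induction n generalizing s with
  | zero =>
    refine .of_le ((Ideal.span_singleton_le_iff_mem _).mpr (Module.mem_annihilator.mpr fun m ↦ ?_))
    simpa using hs m
  | succ n ih =>
    classical
    have hfg : (relationIdeal R x).FG := (hR.isPseudoCoherent X).fg_relationIdeal x
    have hsfg : (Ideal.span {s}).FG := Submodule.fg_span_singleton s
    obtain ⟨T, hTrel, hT⟩ := Submodule.fg_span_iff_fg_span_finset_subset _ |>.mp hfg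
    have hremovable : IsRemovable C (Module.annihilator R X)
        (Ideal.span {s} * relationIdeal R x) := by
      rw [show relationIdeal R x = Ideal.span T from hT, Ideal.span_mul_span',
        Set.singleton_mul, ← Finset.coe_image]
      refine .span (Finset.forall_mem_image.mpr fun t ht ↦ ?_)
      obtain ⟨v, hv, i, rfl⟩ := hTrel ht
      refine ih (x := i.removeNth x) fun m ↦ ?_
      rw [mul_comm, mul_smul]
      exact smul_mem_span_removeNth hv i (hs m)
    refine fun J hJ hAJ hJs ↦ hremovable J hJ hAJ ?_
    have hJfg := Submodule.FG.sup hJ hfg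
    have hJrel : ModuleCat.of R (R ⧸ (J ⊔ relationIdeal R x)) ∈ C :=
      hC.quotient_mem_of_relationIdeal_le hR hX hs le_sup_right hJfg
        (hC.quotient_mem_of_le hJs (sup_le_sup_right le_sup_left _) (Submodule.FG.sup hJfg hsfg))
    exact hC.quotient_sup_mul_mem hR hJs hJrel hJ hsfg hfg

lemma quotient_annihilator_mem (hC : IsWideSubcategory C) (hR : IsLeftCoherentRing R)
    (hX : ModuleCat.of R X ∈ C) : ModuleCat.of R (R ⧸ Module.annihilator R X) ∈ C := by
  obtain ⟨n, x, hx⟩ :=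
    Submodule.fg_iff_exists_fin_generating_family.mp (Module.Finite.fg_top (R := R) (M := X))
  refine hC.isRemovable_span_singleton hR hX (s := 1) (x := x) (by simp [hx]) _
    (hR.isPseudoCoherent X).fg_annihilator le_rfl ?_
  have : Subsingleton (R ⧸ (Module.annihilator R X ⊔ Ideal.span {(1 : R)})) := by
    rw [Ideal.span_singleton_one, sup_top_eq]
    infer_instance
  exact hC.mem_of_subsingleton hX

theorem mem_of_annihilator_le (hC : IsWideSubcategory C) (hR : IsLeftCoherentRing R)
    (hX : ModuleCat.of R X ∈ C) (hXY : Module.annihilator R X ≤ Module.annihilator R Y) :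
    ModuleCat.of R Y ∈ C :=
  hC.mem_of_le_annihilator (hC.quotient_annihilator_mem hR hX) hXY

lemma submodule_mem (hC : IsWideSubcategory C) (hR : IsLeftCoherentRing R)
    (hX : ModuleCat.of R X ∈ C) (L : Submodule R X) [Module.FinitePresentation R L] :
    ModuleCat.of R L ∈ C :=
  hC.mem_of_annihilator_le hR hX
    (LinearMap.annihilator_le_of_injective L.subtype L.subtype_injective)

lemma quotient_mem (hC : IsWideSubcategory C) (hR : IsLeftCoherentRing R)
    (hX : ModuleCat.of R X ∈ C) (L : Submodule R X) [Module.FinitePresentation R (X ⧸ L)] :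
    ModuleCat.of R (X ⧸ L) ∈ C :=
  hC.mem_of_annihilator_le hR hX (LinearMap.annihilator_le_of_surjective L.mkQ L.mkQ_surjective)

end IsWideSubcategory

end Removable

theorem wide_closed_under_sub_and_quot_general (R : Type u) [CommRing R]
    (hcoh : IsLeftCoherentRing R) :
    (∀ C : Set (ModuleCat.{u} R), IsWideSubcategory C →
      ∀ M ∈ C, Module.FinitePresentation R M → ∀ N : Submodule R M,
        (Module.FinitePresentation R N → ModuleCat.of R N ∈ C) ∧
        (Module.FinitePresentation R (M ⧸ N) → ModuleCat.of R (M ⧸ N) ∈ C)) ∧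
    (IsNoetherianRing R →
      ∀ C : Set (ModuleCat.{u} R), IsWideSubcategory C →
        ∀ M ∈ C, Module.Finite R M → ∀ N : Submodule R M, ModuleCat.of R N ∈ C) := by
  refine ⟨fun C hC M hM _ N ↦ ⟨fun _ ↦ hC.submodule_mem hcoh hM N,
    fun _ ↦ hC.quotient_mem hcoh hM N⟩, fun _ C hC M hM _ N ↦ ?_⟩
  have := Module.finitePresentation_of_finite R M
  have := Module.finitePresentation_of_finite R N
  exact hC.submodule_mem hcoh hM N

/-- Corollary 3.7: if `R` is a regular commutative coherent ring,
`C` a wide subcategory of finitely presented `R`-modules and `M ∈ C`, then every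
finitely presented submodule and every finitely presented quotient module of `M` lies
in `C`.  In particular, if `R` is moreover Noetherian, every wide subcategory of
finitely generated `R`-modules is a Serre class (closed under arbitrary submodules). -/
theorem wide_closed_under_sub_and_quot (R : Type u) [CommRing R]
    (hcoh : IsLeftCoherentRing R)
    (hreg : ∀ M : ModuleCat.{u} R, Module.FinitePresentation R M →
      HasFiniteProjectiveDimension R M) :
    (∀ (C : Set (ModuleCat.{u} R)), IsWideSubcategory C → C ⊆ finPresModules R →
      ∀ M ∈ C, ∀ N : Submodule R M,
        (Module.FinitePresentation R N → ModuleCat.of R N ∈ C) ∧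
        (Module.FinitePresentation R (M ⧸ N) → ModuleCat.of R (M ⧸ N) ∈ C)) ∧
    (IsNoetherianRing R →
      ∀ (C : Set (ModuleCat.{u} R)), IsWideSubcategory C →
        (∀ M ∈ C, Module.Finite R M) →
        ∀ M ∈ C, ∀ N : Submodule R M, ModuleCat.of R N ∈ C) := by
  have h := wide_closed_under_sub_and_quot_general R hcoh
  exact ⟨fun C hC hfp M hM ↦ h.1 C hC M hM (hfp hM),
    fun hN C hC hfin M hM ↦ h.2 hN C hC M hM (hfin M hM)⟩
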